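/- Let G be a k-linear Gray category with duals such that for any two parallel 2-morphisms X and Y the space of 3-morphisms G(X,Y) is 1-dimensional and the vertical composition of 3-morphisms is never the zero map. Then every nonzero 3-morphism of G is an isomorphism, every 2-morphism of G is an equivalence (in particular the duality 3-morphisms ev_X, coev_X are isomorphisms), and every 1-morphism of G is a biequivalence (weakly invertible). -/

import Mathlib

open CategoryTheory

/-! ## Cyclic words -/

/-- Cyclic words over `α`: finite lists up to cyclic rotation. -/
abbrev CyclicWord (α : Type) : Type := Quotient (List.IsRotated.setoid α)

/-- The class of a list in the set of cyclic words. -/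
def CyclicWord.mk {α : Type} (l : List α) : CyclicWord α :=
  Quotient.mk (List.IsRotated.setoid α) l

/-- The cyclic source-target matching condition for a list of signed labels:
`s (α_{i+1}, ε_{i+1}) = t (α_i, ε_i)` for all `i` modulo the length. -/
def CyclicMatchList {α β : Type} (s t : α → β) : List α → Prop
  | [] => True
  | a :: l => List.Chain (fun x y => s y = t x) a l ∧
      s a = t ((a :: l).getLast (List.cons_ne_nil a l))

/-! ## Defect data (Definition 2.6) -/

/-- Defect data `𝔻 = (D₃, D₂, D₁, s, t, f)`: three sets of labels, source and target
maps `s, t : D₂ → D₃`, and a folding map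
`f : D₁ → D₃ ⊔ ⊔_{m ≥ 1} ((D₂ × {±}) × ⋯ × (D₂ × {±}))/C_m` such that every cyclic list
in the image of `f` outside `D₃` satisfies the cyclic source-target matching condition. -/
structure DefectData : Type 1 where
  D₃ : Type
  D₂ : Type
  D₁ : Type
  src : D₂ → D₃
  tgt : D₂ → D₃
  fold : D₁ → D₃ ⊕ CyclicWord (D₂ × Bool)
  fold_ne_nil : ∀ x : D₁, fold x ≠ Sum.inr (CyclicWord.mk [])
  fold_match : ∀ (x : D₁) (l : List (D₂ × Bool)), fold x = Sum.inr (CyclicWord.mk l) →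
    CyclicMatchList (fun p => if p.2 then src p.1 else tgt p.1)
      (fun p => if p.2 then tgt p.1 else src p.1) l

namespace DefectData

variable (𝔻 : DefectData)

/-- The source map extended to signed labels: `s(x,+) = s(x)`, `s(x,−) = t(x)`. -/
def sgnSrc : 𝔻.D₂ × Bool → 𝔻.D₃ := fun p => if p.2 then 𝔻.src p.1 else 𝔻.tgt p.1

/-- The target map extended to signed labels: `t(x,+) = t(x)`, `t(x,−) = s(x)`. -/
def sgnTgt : 𝔻.D₂ × Bool → 𝔻.D₃ := fun p => if p.2 then 𝔻.tgt p.1 else 𝔻.src p.1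

/-- `okFrom u l v`: the list `l` of signed `D₂`-labels is a valid sequence of parallel
2-strata read from the 3-stratum labelled `u` to the 3-stratum labelled `v`. -/
def okFrom : 𝔻.D₃ → List (𝔻.D₂ × Bool) → 𝔻.D₃ → Prop
  | u, [], v => u = v
  | u, a :: l, v => 𝔻.sgnSrc a = u ∧ okFrom (𝔻.sgnTgt a) l v

end DefectData

/-- The combinatorial 1-morphisms from `u` to `v` associated to defect data `𝔻`:
lists of signed `D₂`-labels compatible with the source and target maps
(the 1-morphisms of the free pre-2-category on the computad of `𝔻`). -/
def OneCell (𝔻 : DefectData) (u v : 𝔻.D₃) : Type :=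
  {l : List (𝔻.D₂ × Bool) // 𝔻.okFrom u l v}

/-- Reversal of a list of signed labels, with all orientations flipped. -/
def hashList {D₂ : Type} (l : List (D₂ × Bool)) : List (D₂ × Bool) :=
  (l.map fun p => (p.1, !p.2)).reverse

/-- The signed product `g₁^{ε₁} ⋯ g_m^{ε_m}` of a list of signed group elements. -/
def signedProd {G : Type} [Group G] (l : List (G × Bool)) : G :=
  (l.map fun p => if p.2 then p.1 else p.1⁻¹).prod
/-! ## Gray categories (Definition 3.4), k-linear version -/

/-- A `k`-linear Gray category: a set of objects; for all objects `u, v` a `k`-linear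
2-category `G(u,v)` of 1-, 2- and 3-morphisms with strictly associative and unital
compositions `∘` (vertical, `vcomp`) and `⊗` (horizontal, `hcomp`); identity 1-morphisms;
a strictly associative and unital Gray product `□` acting by strict 2-functors
`α □ (−)` and `(−) □ α` (`whiskerL`/`whiskerR` and their actions on 3-morphisms); and an
invertible tensorator `σ_{X,Y}` natural in `X` and `Y`, trivial on identities.
The fields `cast₂`/`cast₃` are the canonical identity-like cells induced by equalities
of parallel cells. -/
structure LinearGrayCategory (k : Type) [Field k] : Type 2 where
  Obj : Type
  Hom₁ : Obj → Obj → Type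
  Hom₂ : ∀ {a b : Obj}, Hom₁ a b → Hom₁ a b → Type
  Hom₃ : ∀ {a b : Obj} {f g : Hom₁ a b}, Hom₂ f g → Hom₂ f g → ModuleCat.{0} k
  id₁ : ∀ a : Obj, Hom₁ a a
  id₂ : ∀ {a b : Obj} (f : Hom₁ a b), Hom₂ f f
  id₃ : ∀ {a b : Obj} {f g : Hom₁ a b} (X : Hom₂ f g), Hom₃ X X
  vcomp : ∀ {a b : Obj} {f g : Hom₁ a b} {X Y Z : Hom₂ f g},
      Hom₃ X Y → Hom₃ Y Z → Hom₃ X Z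
  hcomp : ∀ {a b : Obj} {f g h : Hom₁ a b}, Hom₂ f g → Hom₂ g h → Hom₂ f h
  hcomp₃ : ∀ {a b : Obj} {f g h : Hom₁ a b} {X X' : Hom₂ f g} {Y Y' : Hom₂ g h},
      Hom₃ X X' → Hom₃ Y Y' → Hom₃ (hcomp X Y) (hcomp X' Y')
  gray : ∀ {a b c : Obj}, Hom₁ a b → Hom₁ b c → Hom₁ a c
  whiskerL : ∀ {a b c : Obj} (f : Hom₁ a b) {g g' : Hom₁ b c},
      Hom₂ g g' → Hom₂ (gray f g) (gray f g')
  whiskerR : ∀ {a b c : Obj} {f f' : Hom₁ a b},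
      Hom₂ f f' → ∀ g : Hom₁ b c, Hom₂ (gray f g) (gray f' g)
  whiskerL₃ : ∀ {a b c : Obj} (f : Hom₁ a b) {g g' : Hom₁ b c} {X Y : Hom₂ g g'},
      Hom₃ X Y → Hom₃ (whiskerL f X) (whiskerL f Y)
  whiskerR₃ : ∀ {a b c : Obj} {f f' : Hom₁ a b} {X Y : Hom₂ f f'},
      Hom₃ X Y → ∀ g : Hom₁ b c, Hom₃ (whiskerR X g) (whiskerR Y g)
  cast₂ : ∀ {a b : Obj} {f g : Hom₁ a b}, f = g → Hom₂ f g
  cast₂_rfl : ∀ {a b : Obj} (f : Hom₁ a b), cast₂ (rfl : f = f) = id₂ f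
  cast₃ : ∀ {a b : Obj} {f g : Hom₁ a b} {X Y : Hom₂ f g}, X = Y → Hom₃ X Y
  cast₃_rfl : ∀ {a b : Obj} {f g : Hom₁ a b} (X : Hom₂ f g), cast₃ (rfl : X = X) = id₃ X
  -- vertical composition is a category structure
  vcomp_id_left : ∀ {a b : Obj} {f g : Hom₁ a b} {X Y : Hom₂ f g} (φ : Hom₃ X Y),
      vcomp (id₃ X) φ = φ
  vcomp_id_right : ∀ {a b : Obj} {f g : Hom₁ a b} {X Y : Hom₂ f g} (φ : Hom₃ X Y),
      vcomp φ (id₃ Y) = φ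
  vcomp_assoc : ∀ {a b : Obj} {f g : Hom₁ a b} {X Y Z W : Hom₂ f g}
      (φ : Hom₃ X Y) (ψ : Hom₃ Y Z) (χ : Hom₃ Z W),
      vcomp (vcomp φ ψ) χ = vcomp φ (vcomp ψ χ)
  -- k-linearity of the compositions
  vcomp_add_left : ∀ {a b : Obj} {f g : Hom₁ a b} {X Y Z : Hom₂ f g}
      (φ φ' : Hom₃ X Y) (ψ : Hom₃ Y Z), vcomp (φ + φ') ψ = vcomp φ ψ + vcomp φ' ψ
  vcomp_add_right : ∀ {a b : Obj} {f g : Hom₁ a b} {X Y Z : Hom₂ f g}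
      (φ : Hom₃ X Y) (ψ ψ' : Hom₃ Y Z), vcomp φ (ψ + ψ') = vcomp φ ψ + vcomp φ ψ'
  vcomp_smul_left : ∀ {a b : Obj} {f g : Hom₁ a b} {X Y Z : Hom₂ f g}
      (r : k) (φ : Hom₃ X Y) (ψ : Hom₃ Y Z), vcomp (r • φ) ψ = r • vcomp φ ψ
  vcomp_smul_right : ∀ {a b : Obj} {f g : Hom₁ a b} {X Y Z : Hom₂ f g}
      (r : k) (φ : Hom₃ X Y) (ψ : Hom₃ Y Z), vcomp φ (r • ψ) = r • vcomp φ ψ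
  -- horizontal composition: strict 2-category axioms
  hcomp_id_left : ∀ {a b : Obj} {f g : Hom₁ a b} (X : Hom₂ f g), hcomp (id₂ f) X = X
  hcomp_id_right : ∀ {a b : Obj} {f g : Hom₁ a b} (X : Hom₂ f g), hcomp X (id₂ g) = X
  hcomp_assoc : ∀ {a b : Obj} {f g h i : Hom₁ a b}
      (X : Hom₂ f g) (Y : Hom₂ g h) (Z : Hom₂ h i),
      hcomp (hcomp X Y) Z = hcomp X (hcomp Y Z)
  hcomp₃_id : ∀ {a b : Obj} {f g h : Hom₁ a b} (X : Hom₂ f g) (Y : Hom₂ g h),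
      hcomp₃ (id₃ X) (id₃ Y) = id₃ (hcomp X Y)
  hcomp₃_vcomp : ∀ {a b : Obj} {f g h : Hom₁ a b} {X X' X'' : Hom₂ f g}
      {Y Y' Y'' : Hom₂ g h} (φ : Hom₃ X X') (φ' : Hom₃ X' X'')
      (ψ : Hom₃ Y Y') (ψ' : Hom₃ Y' Y''),
      hcomp₃ (vcomp φ φ') (vcomp ψ ψ') = vcomp (hcomp₃ φ ψ) (hcomp₃ φ' ψ')
  hcomp₃_add_left : ∀ {a b : Obj} {f g h : Hom₁ a b} {X X' : Hom₂ f g} {Y Y' : Hom₂ g h}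
      (φ φ' : Hom₃ X X') (ψ : Hom₃ Y Y'),
      hcomp₃ (φ + φ') ψ = hcomp₃ φ ψ + hcomp₃ φ' ψ
  hcomp₃_smul_left : ∀ {a b : Obj} {f g h : Hom₁ a b} {X X' : Hom₂ f g} {Y Y' : Hom₂ g h}
      (r : k) (φ : Hom₃ X X') (ψ : Hom₃ Y Y'),
      hcomp₃ (r • φ) ψ = r • hcomp₃ φ ψ
  -- the Gray product is strictly associative and unital
  gray_assoc : ∀ {a b c d : Obj} (f : Hom₁ a b) (g : Hom₁ b c) (h : Hom₁ c d),
      gray (gray f g) h = gray f (gray g h)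
  gray_id_left : ∀ {a b : Obj} (f : Hom₁ a b), gray (id₁ a) f = f
  gray_id_right : ∀ {a b : Obj} (f : Hom₁ a b), gray f (id₁ b) = f
  -- `α □ (−)` and `(−) □ α` are strict 2-functors
  whiskerL_id₂ : ∀ {a b c : Obj} (f : Hom₁ a b) (g : Hom₁ b c),
      whiskerL f (id₂ g) = id₂ (gray f g)
  whiskerR_id₂ : ∀ {a b c : Obj} (f : Hom₁ a b) (g : Hom₁ b c),
      whiskerR (id₂ f) g = id₂ (gray f g)
  whiskerL_hcomp : ∀ {a b c : Obj} (f : Hom₁ a b) {g g' g'' : Hom₁ b c}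
      (X : Hom₂ g g') (Y : Hom₂ g' g''),
      whiskerL f (hcomp X Y) = hcomp (whiskerL f X) (whiskerL f Y)
  whiskerR_hcomp : ∀ {a b c : Obj} {f f' f'' : Hom₁ a b}
      (X : Hom₂ f f') (Y : Hom₂ f' f'') (g : Hom₁ b c),
      whiskerR (hcomp X Y) g = hcomp (whiskerR X g) (whiskerR Y g)
  whiskerL₃_id₃ : ∀ {a b c : Obj} (f : Hom₁ a b) {g g' : Hom₁ b c} (X : Hom₂ g g'),
      whiskerL₃ f (id₃ X) = id₃ (whiskerL f X)
  whiskerL₃_vcomp : ∀ {a b c : Obj} (f : Hom₁ a b) {g g' : Hom₁ b c} {X Y Z : Hom₂ g g'}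
      (φ : Hom₃ X Y) (ψ : Hom₃ Y Z),
      whiskerL₃ f (vcomp φ ψ) = vcomp (whiskerL₃ f φ) (whiskerL₃ f ψ)
  whiskerR₃_id₃ : ∀ {a b c : Obj} {f f' : Hom₁ a b} (X : Hom₂ f f') (g : Hom₁ b c),
      whiskerR₃ (id₃ X) g = id₃ (whiskerR X g)
  whiskerR₃_vcomp : ∀ {a b c : Obj} {f f' : Hom₁ a b} {X Y Z : Hom₂ f f'}
      (φ : Hom₃ X Y) (ψ : Hom₃ Y Z) (g : Hom₁ b c),
      whiskerR₃ (vcomp φ ψ) g = vcomp (whiskerR₃ φ g) (whiskerR₃ ψ g)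
  whiskerL₃_add : ∀ {a b c : Obj} (f : Hom₁ a b) {g g' : Hom₁ b c} {X Y : Hom₂ g g'}
      (φ ψ : Hom₃ X Y), whiskerL₃ f (φ + ψ) = whiskerL₃ f φ + whiskerL₃ f ψ
  whiskerL₃_smul : ∀ {a b c : Obj} (f : Hom₁ a b) {g g' : Hom₁ b c} {X Y : Hom₂ g g'}
      (r : k) (φ : Hom₃ X Y), whiskerL₃ f (r • φ) = r • whiskerL₃ f φ
  whiskerR₃_add : ∀ {a b c : Obj} {f f' : Hom₁ a b} {X Y : Hom₂ f f'}
      (φ ψ : Hom₃ X Y) (g : Hom₁ b c), whiskerR₃ (φ + ψ) g = whiskerR₃ φ g + whiskerR₃ ψ g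
  whiskerR₃_smul : ∀ {a b c : Obj} {f f' : Hom₁ a b} {X Y : Hom₂ f f'}
      (r : k) (φ : Hom₃ X Y) (g : Hom₁ b c), whiskerR₃ (r • φ) g = r • whiskerR₃ φ g
  -- whiskering with identity 1-morphisms is trivial
  whiskerL_id₁ : ∀ {a b : Obj} {g g' : Hom₁ a b} (X : Hom₂ g g'),
      HEq (whiskerL (id₁ a) X) X
  whiskerR_id₁ : ∀ {a b : Obj} {f f' : Hom₁ a b} (X : Hom₂ f f'),
      HEq (whiskerR X (id₁ b)) X
  -- the tensorator σ_{X,Y} : (X □ 1) ⊗ (1 □ Y) → (1 □ Y) ⊗ (X □ 1), invertible and natural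
  tensor : ∀ {a b c : Obj} {f f' : Hom₁ a b} {g g' : Hom₁ b c}
      (Y : Hom₂ f f') (X : Hom₂ g g'),
      Hom₃ (hcomp (whiskerR Y g) (whiskerL f' X)) (hcomp (whiskerL f X) (whiskerR Y g'))
  tensorInv : ∀ {a b c : Obj} {f f' : Hom₁ a b} {g g' : Hom₁ b c}
      (Y : Hom₂ f f') (X : Hom₂ g g'),
      Hom₃ (hcomp (whiskerL f X) (whiskerR Y g')) (hcomp (whiskerR Y g) (whiskerL f' X))
  tensor_invL : ∀ {a b c : Obj} {f f' : Hom₁ a b} {g g' : Hom₁ b c}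
      (Y : Hom₂ f f') (X : Hom₂ g g'),
      vcomp (tensor Y X) (tensorInv Y X) = id₃ (hcomp (whiskerR Y g) (whiskerL f' X))
  tensor_invR : ∀ {a b c : Obj} {f f' : Hom₁ a b} {g g' : Hom₁ b c}
      (Y : Hom₂ f f') (X : Hom₂ g g'),
      vcomp (tensorInv Y X) (tensor Y X) = id₃ (hcomp (whiskerL f X) (whiskerR Y g'))
  tensor_natural : ∀ {a b c : Obj} {f f' : Hom₁ a b} {g g' : Hom₁ b c}
      {Y Y' : Hom₂ f f'} {X X' : Hom₂ g g'} (φ : Hom₃ Y Y') (ψ : Hom₃ X X'),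
      vcomp (hcomp₃ (whiskerR₃ φ g) (whiskerL₃ f' ψ)) (tensor Y' X') =
        vcomp (tensor Y X) (hcomp₃ (whiskerL₃ f ψ) (whiskerR₃ φ g'))
  -- the tensorator is trivial on identity 2-morphisms (Definition 3.4 (vi))
  tensor_id_left : ∀ {a b c : Obj} (f : Hom₁ a b) {g g' : Hom₁ b c} (X : Hom₂ g g'),
      HEq (tensor (id₂ f) X) (id₃ (whiskerL f X))
  tensor_id_right : ∀ {a b c : Obj} {f f' : Hom₁ a b} (Y : Hom₂ f f') (g : Hom₁ b c),
      HEq (tensor Y (id₂ g)) (id₃ (whiskerR Y g))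
/-! ## Gray categories with duals (Definition 3.10) -/

/-- A `k`-linear Gray category with duals: each hom-2-category `G(u,v)` is strictly
pivotal, with dual `(−)†` (`dag`) on 2-morphisms, its contravariant action `dag₃` on
3-morphisms, evaluations/coevaluations `ev₂`/`coev₂` satisfying the Zorro moves, and the
Gray-product 2-functors are strictly pivotal; every 1-morphism `α` has a dual `α^#`
(`hash`) together with a fold `coev_α = fold₁` and an invertible triangulator `τ_α`,
where `ev_α = (coev_{α^#})†`. -/
structure GrayCategoryWithDuals (k : Type) [Field k] extends LinearGrayCategory k where
  -- duals for 2-morphisms (strictly pivotal hom-2-categories)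
  dag : ∀ {a b : Obj} {f g : Hom₁ a b}, Hom₂ f g → Hom₂ g f
  dag₃ : ∀ {a b : Obj} {f g : Hom₁ a b} {X Y : Hom₂ f g},
      Hom₃ X Y → Hom₃ (dag Y) (dag X)
  dag_dag : ∀ {a b : Obj} {f g : Hom₁ a b} (X : Hom₂ f g), dag (dag X) = X
  dag_id₂ : ∀ {a b : Obj} (f : Hom₁ a b), dag (id₂ f) = id₂ f
  dag_hcomp : ∀ {a b : Obj} {f g h : Hom₁ a b} (X : Hom₂ f g) (Y : Hom₂ g h),
      dag (hcomp X Y) = hcomp (dag Y) (dag X)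
  dag₃_id₃ : ∀ {a b : Obj} {f g : Hom₁ a b} (X : Hom₂ f g), dag₃ (id₃ X) = id₃ (dag X)
  dag₃_vcomp : ∀ {a b : Obj} {f g : Hom₁ a b} {X Y Z : Hom₂ f g}
      (φ : Hom₃ X Y) (ψ : Hom₃ Y Z), dag₃ (vcomp φ ψ) = vcomp (dag₃ ψ) (dag₃ φ)
  dag₃_dag₃ : ∀ {a b : Obj} {f g : Hom₁ a b} {X Y : Hom₂ f g} (φ : Hom₃ X Y),
      HEq (dag₃ (dag₃ φ)) φ
  dag₃_add : ∀ {a b : Obj} {f g : Hom₁ a b} {X Y : Hom₂ f g} (φ ψ : Hom₃ X Y),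
      dag₃ (φ + ψ) = dag₃ φ + dag₃ ψ
  dag₃_smul : ∀ {a b : Obj} {f g : Hom₁ a b} {X Y : Hom₂ f g} (r : k) (φ : Hom₃ X Y),
      dag₃ (r • φ) = r • dag₃ φ
  -- adjunction 3-morphisms exhibiting `dag X` as the dual of `X`
  ev₂ : ∀ {a b : Obj} {f g : Hom₁ a b} (X : Hom₂ f g), Hom₃ (hcomp X (dag X)) (id₂ f)
  coev₂ : ∀ {a b : Obj} {f g : Hom₁ a b} (X : Hom₂ f g), Hom₃ (id₂ g) (hcomp (dag X) X)
  zorro_left : ∀ {a b : Obj} {f g : Hom₁ a b} (X : Hom₂ f g),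
      vcomp (cast₃ (hcomp_id_right X).symm)
        (vcomp (hcomp₃ (id₃ X) (coev₂ X))
          (vcomp (cast₃ (hcomp_assoc X (dag X) X).symm)
            (vcomp (hcomp₃ (ev₂ X) (id₃ X)) (cast₃ (hcomp_id_left X))))) = id₃ X
  zorro_right : ∀ {a b : Obj} {f g : Hom₁ a b} (X : Hom₂ f g),
      vcomp (cast₃ (hcomp_id_left (dag X)).symm)
        (vcomp (hcomp₃ (coev₂ X) (id₃ (dag X)))
          (vcomp (cast₃ (hcomp_assoc (dag X) X (dag X)))
            (vcomp (hcomp₃ (id₃ (dag X)) (ev₂ X)) (cast₃ (hcomp_id_right (dag X)))))) =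
        id₃ (dag X)
  -- pivotality: `(Φ ⊗ 1) ∘ coev = (1 ⊗ Φ†) ∘ coev`
  coev₂_natural : ∀ {a b : Obj} {f g : Hom₁ a b} {X Y : Hom₂ f g} (φ : Hom₃ X Y),
      vcomp (coev₂ X) (hcomp₃ (id₃ (dag X)) φ) =
        vcomp (coev₂ Y) (hcomp₃ (dag₃ φ) (id₃ Y))
  -- the Gray-product 2-functors are strictly pivotal
  whiskerL_dag : ∀ {a b c : Obj} (f : Hom₁ a b) {g g' : Hom₁ b c} (X : Hom₂ g g'),
      whiskerL f (dag X) = dag (whiskerL f X)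
  whiskerR_dag : ∀ {a b c : Obj} {f f' : Hom₁ a b} (X : Hom₂ f f') (g : Hom₁ b c),
      whiskerR (dag X) g = dag (whiskerR X g)
  whiskerL_ev₂ : ∀ {a b c : Obj} (f : Hom₁ a b) {g g' : Hom₁ b c} (X : Hom₂ g g'),
      HEq (whiskerL₃ f (ev₂ X)) (ev₂ (whiskerL f X))
  whiskerR_ev₂ : ∀ {a b c : Obj} {f f' : Hom₁ a b} (X : Hom₂ f f') (g : Hom₁ b c),
      HEq (whiskerR₃ (ev₂ X) g) (ev₂ (whiskerR X g))
  -- duals for 1-morphisms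
  hash : ∀ {a b : Obj}, Hom₁ a b → Hom₁ b a
  hash_hash : ∀ {a b : Obj} (f : Hom₁ a b), hash (hash f) = f
  hash_id₁ : ∀ a : Obj, hash (id₁ a) = id₁ a
  hash_gray : ∀ {a b c : Obj} (f : Hom₁ a b) (g : Hom₁ b c),
      hash (gray f g) = gray (hash g) (hash f)
  -- the fold `coev_α : 1_v → α □ α^#` and the induced evaluation `ev_α = (coev_{α^#})†`
  fold₁ : ∀ {a b : Obj} (f : Hom₁ a b), Hom₂ (id₁ b) (gray (hash f) f)
  ev₁ : ∀ {a b : Obj} (f : Hom₁ a b), Hom₂ (gray f (hash f)) (id₁ a)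
  ev₁_def : ∀ {a b : Obj} (f : Hom₁ a b), HEq (ev₁ f) (dag (fold₁ (hash f)))
  fold₁_id₁ : ∀ a : Obj, HEq (fold₁ (id₁ a)) (id₂ (id₁ a))
  -- the invertible triangulator (Zorro movie)
  tau : ∀ {a b : Obj} (f : Hom₁ a b),
      Hom₃ (hcomp (cast₂ (gray_id_right f).symm)
          (hcomp (whiskerL f (fold₁ f))
            (hcomp (cast₂ (gray_assoc f (hash f) f).symm)
              (hcomp (whiskerR (ev₁ f) f) (cast₂ (gray_id_left f)))))) (id₂ f)
  tauInv : ∀ {a b : Obj} (f : Hom₁ a b),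
      Hom₃ (id₂ f)
        (hcomp (cast₂ (gray_id_right f).symm)
          (hcomp (whiskerL f (fold₁ f))
            (hcomp (cast₂ (gray_assoc f (hash f) f).symm)
              (hcomp (whiskerR (ev₁ f) f) (cast₂ (gray_id_left f))))))
  tau_invL : ∀ {a b : Obj} (f : Hom₁ a b), vcomp (tau f) (tauInv f) = id₃ _
  tau_invR : ∀ {a b : Obj} (f : Hom₁ a b), vcomp (tauInv f) (tau f) = id₃ (id₂ f)
  tau_id₁ : ∀ a : Obj, HEq (tau (id₁ a)) (id₃ (id₂ (id₁ a)))

namespace LinearGrayCategory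

variable {k : Type} [Field k] (T : LinearGrayCategory k)

/-- A 3-morphism is invertible (with respect to vertical composition). -/
def IsIso₃ {a b : T.Obj} {f g : T.Hom₁ a b} {X Y : T.Hom₂ f g} (φ : T.Hom₃ X Y) : Prop :=
  ∃ ψ : T.Hom₃ Y X, T.vcomp φ ψ = T.id₃ X ∧ T.vcomp ψ φ = T.id₃ Y

/-- Two parallel 2-morphisms are 3-isomorphic. -/
def Iso₂ {a b : T.Obj} {f g : T.Hom₁ a b} (X Y : T.Hom₂ f g) : Prop :=
  ∃ φ : T.Hom₃ X Y, T.IsIso₃ φ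

/-- A 2-morphism is an equivalence in its hom-2-category. -/
def IsEquiv₂ {a b : T.Obj} {f g : T.Hom₁ a b} (X : T.Hom₂ f g) : Prop :=
  ∃ Y : T.Hom₂ g f, T.Iso₂ (T.hcomp X Y) (T.id₂ f) ∧ T.Iso₂ (T.hcomp Y X) (T.id₂ g)

/-- Two parallel 1-morphisms are equivalent (there is an equivalence 2-morphism). -/
def Equiv₁ {a b : T.Obj} (f g : T.Hom₁ a b) : Prop :=
  ∃ X : T.Hom₂ f g, T.IsEquiv₂ X

/-- A 1-morphism `f : a → b` is a biequivalence (weakly invertible). -/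
def IsBiequiv {a b : T.Obj} (f : T.Hom₁ a b) : Prop :=
  ∃ g : T.Hom₁ b a, T.Equiv₁ (T.gray f g) (T.id₁ a) ∧ T.Equiv₁ (T.gray g f) (T.id₁ b)

end LinearGrayCategory

/-!
# Statement 6 (Lemma 4.1)

Let `G` be a `k`-linear Gray category with duals such that for any two parallel
2-morphisms `X`, `Y` the space of 3-morphisms `G(X,Y)` is 1-dimensional and the
vertical composition of 3-morphisms is never the zero map (equivalently, the composite
of two nonzero 3-morphisms is nonzero). Then every nonzero 3-morphism of `G` is an
isomorphism, every 2-morphism of `G` is an equivalence (in particular the duality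
3-morphisms `ev_X` and `coev_X` are isomorphisms), and every 1-morphism of `G` is a
biequivalence (weakly invertible).
-/
theorem gray_category_with_one_dimensional_hom_spaces
    (k : Type) [Field k] (G : GrayCategoryWithDuals k)
    (h1 : ∀ {a b : G.Obj} {f g : G.Hom₁ a b} (X Y : G.Hom₂ f g),
        Module.finrank k (G.Hom₃ X Y) = 1)
    (h2 : ∀ {a b : G.Obj} {f g : G.Hom₁ a b} {X Y Z : G.Hom₂ f g}
        (φ : G.Hom₃ X Y) (ψ : G.Hom₃ Y Z), φ ≠ 0 → ψ ≠ 0 → G.vcomp φ ψ ≠ 0) :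
    -- every nonzero 3-morphism is an isomorphism
    (∀ {a b : G.Obj} {f g : G.Hom₁ a b} {X Y : G.Hom₂ f g} (φ : G.Hom₃ X Y),
        φ ≠ 0 → G.toLinearGrayCategory.IsIso₃ φ) ∧
    -- every 2-morphism is an equivalence
    (∀ {a b : G.Obj} {f g : G.Hom₁ a b} (X : G.Hom₂ f g),
        G.toLinearGrayCategory.IsEquiv₂ X) ∧
    -- in particular the duality 3-morphisms are isomorphisms
    (∀ {a b : G.Obj} {f g : G.Hom₁ a b} (X : G.Hom₂ f g),
        G.toLinearGrayCategory.IsIso₃ (G.ev₂ X) ∧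
        G.toLinearGrayCategory.IsIso₃ (G.coev₂ X)) ∧
    -- every 1-morphism is a biequivalence
    (∀ {a b : G.Obj} (f : G.Hom₁ a b), G.toLinearGrayCategory.IsBiequiv f) := by
  have zl : ∀ {a b : G.Obj} {f g : G.Hom₁ a b} {X Y Z : G.Hom₂ f g} (ψ : G.Hom₃ Y Z),
      G.vcomp (0 : G.Hom₃ X Y) ψ = 0 := by
    intro a b f g X Y Z ψ
    have h := G.vcomp_smul_left (0 : k) (0 : G.Hom₃ X Y) ψ
    rwa [zero_smul, zero_smul] at h
  have zr : ∀ {a b : G.Obj} {f g : G.Hom₁ a b} {X Y Z : G.Hom₂ f g} (φ : G.Hom₃ X Y),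
      G.vcomp φ (0 : G.Hom₃ Y Z) = 0 := by
    intro a b f g X Y Z φ
    have h := G.vcomp_smul_right (0 : k) φ (0 : G.Hom₃ Y Z)
    rwa [zero_smul, zero_smul] at h
  have zh : ∀ {a b : G.Obj} {f g h : G.Hom₁ a b} {X X' : G.Hom₂ f g} {Y Y' : G.Hom₂ g h}
      (ψ : G.Hom₃ Y Y'), G.hcomp₃ (0 : G.Hom₃ X X') ψ = 0 := by
    intro a b f g h X X' Y Y' ψ
    have h := G.hcomp₃_smul_left (0 : k) (0 : G.Hom₃ X X') ψ
    rwa [zero_smul, zero_smul] at h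
  have ex : ∀ {a b : G.Obj} {f g : G.Hom₁ a b} (X Y : G.Hom₂ f g),
      ∃ φ : G.Hom₃ X Y, φ ≠ 0 := by
    intro a b f g X Y
    have : Nontrivial (G.Hom₃ X Y) :=
      Module.nontrivial_of_finrank_pos (R := k) (by rw [h1]; exact one_pos)
    exact exists_ne 0
  have idne : ∀ {a b : G.Obj} {f g : G.Hom₁ a b} (X : G.Hom₂ f g), G.id₃ X ≠ 0 := by
    intro a b f g X h
    obtain ⟨φ, hφ⟩ := ex X X
    apply hφ
    rw [← G.vcomp_id_left φ, h, zl]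
  have iso : ∀ {a b : G.Obj} {f g : G.Hom₁ a b} {X Y : G.Hom₂ f g} (φ : G.Hom₃ X Y),
      φ ≠ 0 → G.toLinearGrayCategory.IsIso₃ φ := by
    intro a b f g X Y φ hφ
    obtain ⟨ψ, hψ⟩ := ex Y X
    obtain ⟨c, hc⟩ := (finrank_eq_one_iff_of_nonzero' _ (h2 φ ψ hφ hψ)).1 (h1 X X) (G.id₃ X)
    obtain ⟨d, hd⟩ := (finrank_eq_one_iff_of_nonzero' _ (h2 ψ φ hψ hφ)).1 (h1 Y Y) (G.id₃ Y)
    rw [← G.vcomp_smul_right] at hc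
    rw [← G.vcomp_smul_left] at hd
    have e : d • ψ = c • ψ := by
      rw [← G.vcomp_id_right (d • ψ), ← hc, ← G.vcomp_assoc, hd, G.vcomp_id_left]
    exact ⟨c • ψ, hc, e ▸ hd⟩
  have evne : ∀ {a b : G.Obj} {f g : G.Hom₁ a b} (X : G.Hom₂ f g), G.ev₂ X ≠ 0 := by
    intro a b f g X h
    apply idne X
    rw [← G.zorro_left X, h, zh, zl, zr, zr, zr]
  have coevne : ∀ {a b : G.Obj} {f g : G.Hom₁ a b} (X : G.Hom₂ f g), G.coev₂ X ≠ 0 := by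
    intro a b f g X h
    apply idne (G.dag X)
    rw [← G.zorro_right X, h, zh, zl, zr]
  have eqv : ∀ {a b : G.Obj} {f g : G.Hom₁ a b} (X : G.Hom₂ f g),
      G.toLinearGrayCategory.IsEquiv₂ X := by
    intro a b f g X
    obtain ⟨φ, hφ⟩ := ex (G.hcomp (G.dag X) X) (G.id₂ g)
    exact ⟨G.dag X, ⟨G.ev₂ X, iso _ (evne X)⟩, ⟨φ, iso φ hφ⟩⟩
  exact ⟨iso, eqv, fun X => ⟨iso _ (evne X), iso _ (coevne X)⟩,
    fun f => ⟨G.hash f, ⟨G.ev₁ f, eqv _⟩, ⟨G.dag (G.fold₁ f), eqv _⟩⟩⟩
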